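/- Purity of normal forms: call a term pure if it contains no subterm of the shape s∘N. If Γ ⊢ M is derivable and the judgement Γ ⊢ M is a normal form with respect to the one-step σπα-reduction ⇝ on judgements (which includes the rule α₂ renaming a context variable), then M is pure. -/

import Mathlib

/- Named terms and substitutions of the λπ-calculus. Variables are natural numbers. -/
mutual
inductive Tm : Type
  | var : ℕ → Tm
  | app : Tm → Tm → Tm
  | lam : ℕ → Tm → Tm
  | clos : Subst → Tm → Tm
inductive Subst : Type
  | id : Subst
  | pi : ℕ → Subst
  | cons : Subst → Tm → ℕ → Subst
  | comp : Subst → Subst → Subst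
end

/- Contexts are lists of variables; the head of the list is the *rightmost* variable,
so the context `Γ, a` of the paper is `a :: Γ`. -/
mutual
/-- `WfTm Γ M` is the judgement `Γ ⊢ M`. -/
inductive WfTm : List ℕ → Tm → Prop
  | var (Γ : List ℕ) (a : ℕ) : WfTm (a :: Γ) (.var a)
  | weak {Γ : List ℕ} {a : ℕ} (b : ℕ) : a ≠ b → WfTm Γ (.var a) → WfTm (b :: Γ) (.var a)
  | app {Γ M N} : WfTm Γ M → WfTm Γ N → WfTm Γ (.app M N)
  | lam {Γ a M} : WfTm (a :: Γ) M → WfTm Γ (.lam a M)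
  | clos {Γ s Δ M} : WfSub Γ s Δ → WfTm Δ M → WfTm Γ (.clos s M)
/-- `WfSub Γ s Δ` is the judgement `Γ ⊢ s ▷ Δ`. -/
inductive WfSub : List ℕ → Subst → List ℕ → Prop
  | id (Γ) : WfSub Γ .id Γ
  | pi (Γ a) : WfSub (a :: Γ) (.pi a) Γ
  | cons {Γ s Δ N} (a) : WfSub Γ s Δ → WfTm Γ N → WfSub Γ (.cons s N a) (a :: Δ)
  | comp {Γ s Δ q Θ} : WfSub Γ s Δ → WfSub Δ q Θ → WfSub Γ (.comp s q) Θ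
end

/-- The operator `O_{λa}` on sequences of finite sets (sequences are 0-indexed:
index `n` corresponds to the paper's index `n+1`). -/
def Olam (a : ℕ) (A : ℕ → Finset ℕ) : ℕ → Finset ℕ
  | 0 => (A 0).erase a ∪ A 1
  | n + 1 => A (n + 2)

/-- The operator `O_π`. -/
def Opi (A : ℕ → Finset ℕ) : ℕ → Finset ℕ
  | 0 => ∅
  | n + 1 => A n

mutual
/-- The free-variable sequence of a term: `FV M n` is the paper's `FV_{n+1}(M)`. -/
def FV : Tm → ℕ → Finset ℕ
  | .var a => fun n => if n = 0 then {a} else ∅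
  | .app M N => fun n => FV M n ∪ FV N n
  | .lam a M => Olam a (FV M)
  | .clos s M => Osub s (FV M)
/-- The operator `O_s` associated with a substitution `s`. -/
def Osub : Subst → (ℕ → Finset ℕ) → (ℕ → Finset ℕ)
  | .id => fun A => A
  | .pi _ => fun A => Opi A
  | .cons s N a => fun A n => Osub s (Olam a A) n ∪ FV N n
  | .comp s q => fun A => Osub s (Osub q A)
end

/-- Iterated abstraction `λΓ.M` (recall the head of the list is the rightmost variable). -/
def lamCtx : List ℕ → Tm → Tm
  | [], M => M
  | a :: Γ, M => lamCtx Γ (.lam a M)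

/-- Free variables of a judgement: `FV(Γ ⊢ M) = FV(λΓ.M)`. -/
def FVJ (Γ : List ℕ) (M : Tm) : ℕ → Finset ℕ := FV (lamCtx Γ M)

/-- Iterated lifting `⇑_Δ(s)`. -/
def Uparrow : List ℕ → Subst → Subst
  | [], s => s
  | a :: Δ, s => .cons (.comp (.pi a) (Uparrow Δ s)) (.var a) a

/- One-step reduction of the λπ-calculus (compatible closure).  The Boolean
parameter tells whether the rule `Beta` is allowed: `StepTm true` is λπ-reduction,
`StepTm false` is σπα-reduction. -/
mutual
inductive StepTm : Bool → Tm → Tm → Prop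
  | beta {a : ℕ} {M N : Tm} :
      StepTm true (.app (.lam a M) N) (.clos (.cons .id N a) M)
  | abs {β : Bool} {s : Subst} {a : ℕ} {M : Tm} :
      StepTm β (.clos s (.lam a M))
        (.lam a (.clos (.cons (.comp (.pi a) s) (.var a) a) M))
  | app {β : Bool} {s : Subst} {M N : Tm} :
      StepTm β (.clos s (.app M N)) (.app (.clos s M) (.clos s N))
  | consVar {β : Bool} {s : Subst} {N : Tm} {a : ℕ} :
      StepTm β (.clos (.cons s N a) (.var a)) N
  | new {β : Bool} {s : Subst} {N : Tm} {a b : ℕ} : a ≠ b →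
      StepTm β (.clos (.cons s N a) (.var b)) (.clos s (.var b))
  | idVar {β : Bool} {a : ℕ} : StepTm β (.clos .id (.var a)) (.var a)
  | clos {β : Bool} {s q : Subst} {M : Tm} :
      StepTm β (.clos s (.clos q M)) (.clos (.comp s q) M)
  | pi1 {β : Bool} {a b : ℕ} : a ≠ b → StepTm β (.clos (.pi a) (.var b)) (.var b)
  | pi2 {β : Bool} {s : Subst} {a b : ℕ} : a ≠ b →
      StepTm β (.clos (.comp s (.pi a)) (.var b)) (.clos s (.var b))
  | alpha1 {β : Bool} {a b : ℕ} {M : Tm} :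
      (∃ i, a ∈ FV (.lam a M) i) → (∀ i, b ∉ FV (.lam a M) i) →
      StepTm β (.lam a M) (.lam b (.clos (.cons (.pi b) (.var b) a) M))
  | lamCong {β : Bool} {a : ℕ} {M₁ M₂ : Tm} :
      StepTm β M₁ M₂ → StepTm β (.lam a M₁) (.lam a M₂)
  | appL {β : Bool} {M₁ M₂ N : Tm} : StepTm β M₁ M₂ → StepTm β (.app M₁ N) (.app M₂ N)
  | appR {β : Bool} {M N₁ N₂ : Tm} : StepTm β N₁ N₂ → StepTm β (.app M N₁) (.app M N₂)
  | closL {β : Bool} {s₁ s₂ : Subst} {M : Tm} :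
      StepSub β s₁ s₂ → StepTm β (.clos s₁ M) (.clos s₂ M)
  | closR {β : Bool} {s : Subst} {M₁ M₂ : Tm} :
      StepTm β M₁ M₂ → StepTm β (.clos s M₁) (.clos s M₂)
inductive StepSub : Bool → Subst → Subst → Prop
  | ass {β : Bool} {s q r : Subst} :
      StepSub β (.comp s (.comp q r)) (.comp (.comp s q) r)
  | idR {β : Bool} {s : Subst} : StepSub β (.comp s .id) s
  | idShift {β : Bool} {a : ℕ} : StepSub β (.comp .id (.pi a)) (.pi a)
  | consShift {β : Bool} {s : Subst} {N : Tm} {a : ℕ} :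
      StepSub β (.comp (.cons s N a) (.pi a)) s
  | map {β : Bool} {s q : Subst} {N : Tm} {a : ℕ} :
      StepSub β (.comp s (.cons q N a)) (.cons (.comp s q) (.clos s N) a)
  | consL {β : Bool} {s₁ s₂ : Subst} {N : Tm} {a : ℕ} :
      StepSub β s₁ s₂ → StepSub β (.cons s₁ N a) (.cons s₂ N a)
  | consR {β : Bool} {s : Subst} {N₁ N₂ : Tm} {a : ℕ} :
      StepTm β N₁ N₂ → StepSub β (.cons s N₁ a) (.cons s N₂ a)
  | compL {β : Bool} {s₁ s₂ q : Subst} :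
      StepSub β s₁ s₂ → StepSub β (.comp s₁ q) (.comp s₂ q)
  | compR {β : Bool} {s q₁ q₂ : Subst} :
      StepSub β q₁ q₂ → StepSub β (.comp s q₁) (.comp s q₂)
end

/-- One-step reduction `⇝` on judgements `Γ ⊢ M`, including the rule `α₂`.
`StepJ true` is λπ, `StepJ false` is σπα. -/
inductive StepJ (β : Bool) : List ℕ × Tm → List ℕ × Tm → Prop
  | step {Γ : List ℕ} {M₁ M₂ : Tm} : StepTm β M₁ M₂ → StepJ β (Γ, M₁) (Γ, M₂)
  | alpha2 {Γ Δ : List ℕ} {a b : ℕ} {M : Tm} :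
      (∃ i, a ∈ FVJ (Δ ++ [a]) M i) → (∀ i, b ∉ FVJ (Δ ++ [a]) M i) →
      StepJ β (Δ ++ a :: Γ, M)
        (Δ ++ b :: Γ, .clos (Uparrow Δ (.cons (.pi b) (.var b) a)) M)

/- Name-free (de Bruijn) terms and substitutions. -/
mutual
inductive NTm : Type
  | one : NTm
  | app : NTm → NTm → NTm
  | lam : NTm → NTm
  | clos : NSub → NTm → NTm
inductive NSub : Type
  | id : NSub
  | pi : NSub
  | cons : NSub → NTm → NSub
  | comp : NSub → NSub → NSub
end

/-- `piIter n` is the left-nested composition of `n+1` copies of `π`. -/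
def piIter : ℕ → NSub
  | 0 => .pi
  | k + 1 => .comp (piIter k) .pi

/-- `dbr n` is the de Bruijn index `n+1̲`: `dbr 0 = 1` and
`dbr (n+1) = ((…(π∘π)∘…)∘π)∘1` with `n+1` occurrences of `π`. -/
def dbr : ℕ → NTm
  | 0 => .one
  | n + 1 => .clos (piIter n) .one

/- One-step reduction of λσ (`NStepTm true`) resp. σ (`NStepTm false`)
on name-free terms/substitutions. -/
mutual
inductive NStepTm : Bool → NTm → NTm → Prop
  | beta {U V : NTm} : NStepTm true (.app (.lam U) V) (.clos (.cons .id V) U)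
  | abs {β : Bool} {u : NSub} {U : NTm} :
      NStepTm β (.clos u (.lam U)) (.lam (.clos (.cons (.comp .pi u) .one) U))
  | app {β : Bool} {u : NSub} {U V : NTm} :
      NStepTm β (.clos u (.app U V)) (.app (.clos u U) (.clos u V))
  | consVar {β : Bool} {u : NSub} {V : NTm} : NStepTm β (.clos (.cons u V) .one) V
  | idVar {β : Bool} : NStepTm β (.clos .id .one) .one
  | clos {β : Bool} {u v : NSub} {U : NTm} :
      NStepTm β (.clos u (.clos v U)) (.clos (.comp u v) U)
  | lamCong {β : Bool} {U₁ U₂ : NTm} : NStepTm β U₁ U₂ → NStepTm β (.lam U₁) (.lam U₂)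
  | appL {β : Bool} {U₁ U₂ V : NTm} : NStepTm β U₁ U₂ → NStepTm β (.app U₁ V) (.app U₂ V)
  | appR {β : Bool} {U V₁ V₂ : NTm} : NStepTm β V₁ V₂ → NStepTm β (.app U V₁) (.app U V₂)
  | closL {β : Bool} {u₁ u₂ : NSub} {U : NTm} :
      NStepSub β u₁ u₂ → NStepTm β (.clos u₁ U) (.clos u₂ U)
  | closR {β : Bool} {u : NSub} {U₁ U₂ : NTm} :
      NStepTm β U₁ U₂ → NStepTm β (.clos u U₁) (.clos u U₂)
inductive NStepSub : Bool → NSub → NSub → Prop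
  | ass {β : Bool} {u v w : NSub} : NStepSub β (.comp u (.comp v w)) (.comp (.comp u v) w)
  | idR {β : Bool} {u : NSub} : NStepSub β (.comp u .id) u
  | idShift {β : Bool} : NStepSub β (.comp .id .pi) .pi
  | consShift {β : Bool} {u : NSub} {V : NTm} : NStepSub β (.comp (.cons u V) .pi) u
  | map {β : Bool} {u v : NSub} {V : NTm} :
      NStepSub β (.comp u (.cons v V)) (.cons (.comp u v) (.clos u V))
  | consL {β : Bool} {u₁ u₂ : NSub} {V : NTm} :
      NStepSub β u₁ u₂ → NStepSub β (.cons u₁ V) (.cons u₂ V)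
  | consR {β : Bool} {u : NSub} {V₁ V₂ : NTm} :
      NStepTm β V₁ V₂ → NStepSub β (.cons u V₁) (.cons u V₂)
  | compL {β : Bool} {u₁ u₂ v : NSub} :
      NStepSub β u₁ u₂ → NStepSub β (.comp u₁ v) (.comp u₂ v)
  | compR {β : Bool} {u v₁ v₂ : NSub} :
      NStepSub β v₁ v₂ → NStepSub β (.comp u v₁) (.comp u v₂)
end

/- The correspondence `(Γ ⊢ M) ⟹ U` resp. `(Γ ⊢ s ▷ Δ) ⟹ u` between judgements and
name-free terms/substitutions (Definition 7.6 of the paper). -/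
mutual
inductive TrTm : List ℕ → Tm → NTm → Prop
  | var (Γ : List ℕ) (a : ℕ) : TrTm (a :: Γ) (.var a) (dbr 0)
  | weak {Γ : List ℕ} {a : ℕ} {n : ℕ} (b : ℕ) : a ≠ b →
      TrTm Γ (.var a) (dbr n) → TrTm (b :: Γ) (.var a) (dbr (n + 1))
  | app {Γ M N U V} : TrTm Γ M U → TrTm Γ N V → TrTm Γ (.app M N) (.app U V)
  | lam {Γ a M U} : TrTm (a :: Γ) M U → TrTm Γ (.lam a M) (.lam U)
  | clos {Γ s Δ M u U} : TrSub Γ s Δ u → TrTm Δ M U → TrTm Γ (.clos s M) (.clos u U)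
inductive TrSub : List ℕ → Subst → List ℕ → NSub → Prop
  | id (Γ) : TrSub Γ .id Γ .id
  | pi (Γ a) : TrSub (a :: Γ) (.pi a) Γ .pi
  | cons {Γ s Δ N u V} (a) : TrSub Γ s Δ u → TrTm Γ N V →
      TrSub Γ (.cons s N a) (a :: Δ) (.cons u V)
  | comp {Γ s Δ q Θ u v} : TrSub Γ s Δ u → TrSub Δ q Θ v →
      TrSub Γ (.comp s q) Θ (.comp u v)
end

/-- Left-nested compositions `(…((π_{a₁}∘π_{a₂})∘…)∘π_{a_n}` with `n ≥ 1`. -/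
inductive IsPiComp : Subst → Prop
  | single (a : ℕ) : IsPiComp (.pi a)
  | comp {s : Subst} (a : ℕ) : IsPiComp s → IsPiComp (.comp s (.pi a))

/-- Substitutions of the form `⟨r, N₁\b₁, …, N_k\b_k⟩` with `k ≥ 1`, where `r` is `id`
or a left-nested composition of `π`'s. -/
inductive IsConsChain : Subst → Prop
  | base {s : Subst} {N : Tm} {b : ℕ} : (s = Subst.id ∨ IsPiComp s) →
      IsConsChain (.cons s N b)
  | cons {s : Subst} {N : Tm} {b : ℕ} : IsConsChain s → IsConsChain (.cons s N b)

/-- The four shapes (i)–(iv) of σπα-normal substitutions. -/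
def NFShape (s : Subst) : Prop := s = Subst.id ∨ IsPiComp s ∨ IsConsChain s

/-- A term is pure iff it contains no subterm of the shape `s∘N`. -/
def PureTm : Tm → Prop
  | .var _ => True
  | .app M N => PureTm M ∧ PureTm N
  | .lam _ M => PureTm M
  | .clos _ _ => False

/-- `PiChainEnd s b`: `s` is a left-nested composition of `π`'s whose rightmost factor
is `π_b`, i.e. `s = ((…(π_{a₁}∘…)∘π_{a_m})∘π_b` with `m ≥ 0`. -/
inductive PiChainEnd : Subst → ℕ → Prop
  | single (b : ℕ) : PiChainEnd (.pi b) b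
  | comp {s : Subst} (b : ℕ) : IsPiComp s → PiChainEnd (.comp s (.pi b)) b

/-- Terms constructed from variables and blocks `((…((π_{a₁}∘π_{a₂})∘…)∘π_b)∘b`
(with `m ≥ 0` factors before `π_b`) using application and abstraction only. -/
inductive FromBlocks : Tm → Prop
  | var (a : ℕ) : FromBlocks (.var a)
  | block {s : Subst} {b : ℕ} : PiChainEnd s b → FromBlocks (.clos s (.var b))
  | app {M N : Tm} : FromBlocks M → FromBlocks N → FromBlocks (.app M N)
  | lam {M : Tm} (a : ℕ) : FromBlocks M → FromBlocks (.lam a M)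

/- The compatible closure of the single rule α₁ on terms and substitutions. -/
mutual
inductive A1Tm : Tm → Tm → Prop
  | alpha1 {a b : ℕ} {M : Tm} :
      (∃ i, a ∈ FV (.lam a M) i) → (∀ i, b ∉ FV (.lam a M) i) →
      A1Tm (.lam a M) (.lam b (.clos (.cons (.pi b) (.var b) a) M))
  | lamCong {a : ℕ} {M₁ M₂ : Tm} : A1Tm M₁ M₂ → A1Tm (.lam a M₁) (.lam a M₂)
  | appL {M₁ M₂ N : Tm} : A1Tm M₁ M₂ → A1Tm (.app M₁ N) (.app M₂ N)
  | appR {M N₁ N₂ : Tm} : A1Tm N₁ N₂ → A1Tm (.app M N₁) (.app M N₂)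
  | closL {s₁ s₂ : Subst} {M : Tm} : A1Sub s₁ s₂ → A1Tm (.clos s₁ M) (.clos s₂ M)
  | closR {s : Subst} {M₁ M₂ : Tm} : A1Tm M₁ M₂ → A1Tm (.clos s M₁) (.clos s M₂)
inductive A1Sub : Subst → Subst → Prop
  | consL {s₁ s₂ : Subst} {N : Tm} {a : ℕ} : A1Sub s₁ s₂ → A1Sub (.cons s₁ N a) (.cons s₂ N a)
  | consR {s : Subst} {N₁ N₂ : Tm} {a : ℕ} : A1Tm N₁ N₂ → A1Sub (.cons s N₁ a) (.cons s N₂ a)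
  | compL {s₁ s₂ q : Subst} : A1Sub s₁ s₂ → A1Sub (.comp s₁ q) (.comp s₂ q)
  | compR {s q₁ q₂ : Subst} : A1Sub q₁ q₂ → A1Sub (.comp s q₁) (.comp s q₂)
end

/-!
A typed normal term is built from variables and blocks `((…∘π_c)∘π_b)∘b` by application and
abstraction. The `n + 1` shifts of a block drop `n + 1` declarations of the context, the last of
them a declaration of `b`, so `b` lies in `FV_{n+2}`: the block refers to a declaration of `b`
beyond the one at depth `n`. If the skipped declaration comes from an enclosing `λb`, that
abstraction is an `α₁`-redex; if it stands in the context, the judgement is an `α₂`-redex. Both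
rules need a variable that is not free, and there is one because the sets of a free-variable
sequence have a finite union. Hence a normal derivable judgement contains no block at all.
-/

/-! ### Existence of fresh variables -/

/-- The union `⋃ᵢ Aᵢ` of a free-variable sequence, in which fresh variables are chosen. -/
def allVars (A : ℕ → Finset ℕ) : Set ℕ := ⋃ i, (A i : Set ℕ)

theorem allVars_union (A B : ℕ → Finset ℕ) :
    allVars (fun n => A n ∪ B n) = allVars A ∪ allVars B := by
  simp only [allVars, Finset.coe_union, Set.iUnion_union_distrib]

theorem allVars_Olam_subset (a : ℕ) (A : ℕ → Finset ℕ) : allVars (Olam a A) ⊆ allVars A := by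
  refine Set.iUnion_subset fun n c hc => Set.mem_iUnion.2 ?_
  cases n with
  | zero =>
    rcases Finset.mem_union.1 hc with hc | hc
    · exact ⟨0, Finset.mem_of_mem_erase hc⟩
    · exact ⟨1, hc⟩
  | succ n => exact ⟨n + 2, hc⟩

theorem allVars_Opi_subset (A : ℕ → Finset ℕ) : allVars (Opi A) ⊆ allVars A := by
  refine Set.iUnion_subset fun n c hc => Set.mem_iUnion.2 ?_
  cases n with
  | zero => exact absurd hc (Finset.notMem_empty c)
  | succ n => exact ⟨n, hc⟩

mutual

theorem finite_allVars_FV : ∀ M : Tm, (allVars (FV M)).Finite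
  | .var a => (Set.finite_singleton a).subset <| Set.iUnion_subset fun n c hc => by
      simp only [FV] at hc
      split at hc <;> simp_all
  | .app M N => by
      simpa only [FV, allVars_union] using (finite_allVars_FV M).union (finite_allVars_FV N)
  | .lam a M => by
      simpa only [FV] using (finite_allVars_FV M).subset (allVars_Olam_subset a _)
  | .clos s M => by
      simpa only [FV] using finite_allVars_Osub s (finite_allVars_FV M)

theorem finite_allVars_Osub :
    ∀ (s : Subst) {A : ℕ → Finset ℕ}, (allVars A).Finite → (allVars (Osub s A)).Finite
  | .id, _, hA => by simpa only [Osub] using hA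
  | .pi _, A, hA => by simpa only [Osub] using hA.subset (allVars_Opi_subset A)
  | .cons s N a, A, hA => by
      simpa only [Osub, allVars_union] using
        (finite_allVars_Osub s (hA.subset (allVars_Olam_subset a A))).union (finite_allVars_FV N)
  | .comp s q, _, hA => by
      simpa only [Osub] using finite_allVars_Osub s (finite_allVars_Osub q hA)

end

theorem exists_forall_notMem_FV (M : Tm) : ∃ b, ∀ i, b ∉ FV M i := by
  simpa [allVars] using (finite_allVars_FV M).exists_notMem

/-! ### Normal forms -/

/-- `x` is a normal form of the one-step reduction `r`. -/
def IsNormal {α : Type*} (r : α → α → Prop) (x : α) : Prop := ∀ y, ¬ r x y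

namespace IsNormal

theorem of_map {α γ : Type*} {r : α → α → Prop} {t : γ → γ → Prop} {x : α} {z : γ} {f : α → γ}
    (hz : IsNormal t z) (hf : ∀ y, r x y → t z (f y)) : IsNormal r x :=
  fun y hy => hz _ (hf y hy)

variable {β : Bool}

theorem nfShape : ∀ {s : Subst} {Γ Δ : List ℕ}, WfSub Γ s Δ → IsNormal (StepSub β) s → NFShape s
  | .id, _, _, _, _ => .inl rfl
  | .pi a, _, _, _, _ => .inr (.inl (.single a))
  | .cons _ _ _, _, _, .cons _ h _, hn => by
      rcases nfShape h (hn.of_map fun _ => .consL) with hs | hs | hs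
      · exact .inr (.inr (.base (.inl hs)))
      · exact .inr (.inr (.base (.inr hs)))
      · exact .inr (.inr (.cons hs))
  | .comp _ .id, _, _, _, hn => (hn _ .idR).elim
  | .comp _ (.cons _ _ _), _, _, _, hn => (hn _ .map).elim
  | .comp _ (.comp _ _), _, _, _, hn => (hn _ .ass).elim
  | .comp _ (.pi a), _, _, .comp h (.pi _ _), hn => by
      rcases nfShape h (hn.of_map fun _ => .compL) with rfl | hs | hs
      · exact (hn _ .idShift).elim
      · exact .inr (.inl (.comp a hs))
      · -- typing makes the outermost bound variable of the chain equal to `a`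
        cases hs <;> cases h <;> exact (hn _ .consShift).elim

theorem piChainEnd {Γ Δ : List ℕ} {s : Subst} {b : ℕ} (h : WfSub Γ s Δ)
    (hn : IsNormal (StepTm β) (.clos s (.var b))) : PiChainEnd s b := by
  have not_cons : ∀ q N a, s ≠ .cons q N a := by
    rintro q N a rfl
    by_cases hab : a = b
    · subst hab
      exact hn _ .consVar
    · exact hn _ (.new hab)
  rcases nfShape h (hn.of_map fun _ => .closL) with rfl | hs | hs
  · exact (hn _ .idVar).elim
  · cases hs with
    | single a =>
      obtain rfl : a = b := by_contra fun hab => hn _ (.pi1 hab)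
      exact .single a
    | comp a hq =>
      obtain rfl : a = b := by_contra fun hab => hn _ (.pi2 hab)
      exact .comp a hq
  · cases hs <;> exact (not_cons _ _ _ rfl).elim

theorem fromBlocks : ∀ {M : Tm} {Γ : List ℕ}, WfTm Γ M → IsNormal (StepTm β) M → FromBlocks M
  | .var a, _, _, _ => .var a
  | .app _ _, _, .app hM hN, hn =>
      .app (fromBlocks hM (hn.of_map fun _ => .appL)) (fromBlocks hN (hn.of_map fun _ => .appR))
  | .lam a _, _, .lam hM, hn => .lam a (fromBlocks hM (hn.of_map fun _ => .lamCong))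
  | .clos _ (.var _), _, .clos hs _, hn => .block (hn.piChainEnd hs)
  | .clos _ (.app _ _), _, _, hn => (hn _ .app).elim
  | .clos _ (.lam _ _), _, _, hn => (hn _ .abs).elim
  | .clos _ (.clos _ _), _, _, hn => (hn _ .clos).elim

theorem notMem_FV_lam {a : ℕ} {M : Tm} (hn : IsNormal (StepTm β) (.lam a M)) (i : ℕ) :
    a ∉ FV (.lam a M) i := by
  intro ha
  obtain ⟨b, hb⟩ := exists_forall_notMem_FV (.lam a M)
  exact hn _ (.alpha1 ⟨i, ha⟩ hb)

theorem notMem_FVJ {Γ Δ : List ℕ} {a : ℕ} {M : Tm} (hn : IsNormal (StepJ β) (Δ ++ a :: Γ, M))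
    (i : ℕ) : a ∉ FVJ (Δ ++ [a]) M i := by
  intro ha
  obtain ⟨b, hb⟩ := exists_forall_notMem_FV (lamCtx (Δ ++ [a]) M)
  exact hn _ (.alpha2 ⟨i, ha⟩ hb)

end IsNormal

/-! ### References beyond a declaration -/

/-- Some declaration of a variable `a` in `Γ` is skipped by a free occurrence of `a` in `M`, which
refers to a declaration of `a` further left. Since `FV M n` collects the variables that remain after
`n` declarations have been dropped, a declaration at depth `n` is skipped by the elements of
`FV M (n + 1)`. -/
def SkipsDecl (Γ : List ℕ) (M : Tm) : Prop :=
  ∃ (Δ : List ℕ) (a : ℕ) (Γ' : List ℕ), Γ = Δ ++ a :: Γ' ∧ a ∈ FV M (Δ.length + 1)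

namespace SkipsDecl

theorem mono {Γ : List ℕ} {M N : Tm} (hMN : ∀ n, FV M n ⊆ FV N n) :
    SkipsDecl Γ M → SkipsDecl Γ N := by
  rintro ⟨Δ, a, Γ', hΓ, ha⟩
  exact ⟨Δ, a, Γ', hΓ, hMN _ ha⟩

theorem mem_FV_or_lam {Γ : List ℕ} {a : ℕ} {M : Tm} :
    SkipsDecl (a :: Γ) M → a ∈ FV M 1 ∨ SkipsDecl Γ (.lam a M) := by
  rintro ⟨Δ, b, Γ', hΓ, hb⟩
  rcases List.cons_eq_append_iff.1 hΓ with ⟨rfl, h⟩ | ⟨Θ, rfl, rfl⟩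
  · obtain ⟨rfl, rfl⟩ := List.cons.inj h
    exact .inl hb
  · exact .inr ⟨Θ, b, Γ', rfl, by simpa only [FV, Olam, List.length_cons] using hb⟩

end SkipsDecl

theorem lamCtx_append (Δ Θ : List ℕ) (M : Tm) : lamCtx (Δ ++ Θ) M = lamCtx Θ (lamCtx Δ M) := by
  induction Δ generalizing M with
  | nil => rfl
  | cons a _ ih => exact ih (.lam a M)

theorem FV_lamCtx_succ (Δ : List ℕ) (M : Tm) (n : ℕ) :
    FV (lamCtx Δ M) (n + 1) = FV M (Δ.length + n + 1) := by
  induction Δ generalizing M with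
  | nil => simp only [lamCtx, List.length_nil, Nat.zero_add]
  | cons _ _ ih => simp only [lamCtx, ih, FV, Olam, List.length_cons, Nat.add_right_comm]

theorem IsNormal.not_skipsDecl {β : Bool} {Γ : List ℕ} {M : Tm}
    (hn : IsNormal (StepJ β) (Γ, M)) : ¬ SkipsDecl Γ M := by
  rintro ⟨Δ, a, Γ', rfl, ha⟩
  apply hn.notMem_FVJ 0
  rw [FVJ, lamCtx_append]
  exact Finset.mem_union_right _ (by rwa [FV_lamCtx_succ])

theorem IsPiComp.exists_eq_append {s : Subst} {Γ Δ : List ℕ} (hs : IsPiComp s)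
    (h : WfSub Γ s Δ) :
    ∃ Θ : List ℕ, Γ = Θ ++ Δ ∧ ∀ A i, Osub s A (Θ.length + i) = A i := by
  induction hs generalizing Δ with
  | single a =>
    cases h
    refine ⟨[a], rfl, fun A i => ?_⟩
    simp only [Osub, List.length_singleton, Nat.add_comm 1, Opi]
  | comp a _ ih =>
    cases h with
    | comp hq ha =>
      cases ha
      obtain ⟨Θ, rfl, hΘ⟩ := ih hq
      refine ⟨Θ ++ [a], by simp, fun A i => ?_⟩
      simp only [Osub, List.length_append, List.length_singleton, Nat.add_assoc, Nat.add_comm 1,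
        hΘ, Opi]

theorem PiChainEnd.exists_eq_append {s : Subst} {b : ℕ} {Γ Δ : List ℕ} (hs : PiChainEnd s b)
    (h : WfSub Γ s Δ) :
    ∃ Θ : List ℕ, Γ = Θ ++ b :: Δ ∧ ∀ A i, Osub s A (Θ.length + i + 1) = A i := by
  cases hs with
  | single =>
    cases h
    exact ⟨[], rfl, by simp [Osub, Opi]⟩
  | comp _ hq =>
    cases h with
    | comp hqsub hb =>
      cases hb
      obtain ⟨Θ, rfl, hΘ⟩ := hq.exists_eq_append hqsub
      exact ⟨Θ, rfl, by simp [Osub, Nat.add_assoc, hΘ, Opi]⟩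

theorem PiChainEnd.skipsDecl {s : Subst} {b : ℕ} {Γ Δ : List ℕ} (hs : PiChainEnd s b)
    (h : WfSub Γ s Δ) : SkipsDecl Γ (.clos s (.var b)) := by
  obtain ⟨Θ, hΓ, hΘ⟩ := hs.exists_eq_append h
  have hFV : FV (.clos s (.var b)) (Θ.length + 1) = {b} := by simpa [FV] using hΘ (FV (.var b)) 0
  exact ⟨Θ, b, Δ, hΓ, by simp [hFV]⟩

theorem FromBlocks.pureTm {β : Bool} {M : Tm} {Γ : List ℕ} (hM : FromBlocks M) (h : WfTm Γ M)
    (hn : IsNormal (StepTm β) M) (hskip : ¬ SkipsDecl Γ M) : PureTm M := by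
  induction hM generalizing Γ with
  | var => simp only [PureTm]
  | block hs =>
    cases h with
    | clos hsub _ => exact (hskip (hs.skipsDecl hsub)).elim
  | @app M N _ _ ihM ihN =>
    cases h with
    | app hM hN =>
      have hFVM : ∀ n, FV M n ⊆ FV (.app M N) n := by simp [FV]
      have hFVN : ∀ n, FV N n ⊆ FV (.app M N) n := by simp [FV]
      rw [PureTm]
      exact ⟨ihM hM (hn.of_map fun _ => .appL) (mt (.mono hFVM) hskip),
        ihN hN (hn.of_map fun _ => .appR) (mt (.mono hFVN) hskip)⟩
  | @lam M a _ ih =>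
    cases h with
    | lam hM =>
      have ha : a ∉ FV M 1 := fun ha => hn.notMem_FV_lam 0 (Finset.mem_union_right _ ha)
      rw [PureTm]
      exact ih hM (hn.of_map fun _ => .lamCong) fun hskipM => hskipM.mem_FV_or_lam.elim ha hskip

/-- a derivable judgement that is a σπα-normal form (w.r.t. `⇝`,
including α₂) has a pure term. -/
theorem normal_form_pure {Γ : List ℕ} {M : Tm}
    (h : WfTm Γ M) (hnf : ∀ p : List ℕ × Tm, ¬ StepJ false (Γ, M) p) : PureTm M := by
  have hJ : IsNormal (StepJ false) (Γ, M) := hnf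
  have hM : IsNormal (StepTm false) M := hJ.of_map fun _ => .step
  exact (hM.fromBlocks h).pureTm h hM hJ.not_skipsDecl
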